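/- Let n and K be positive integers with n ≤ K, and let F be a uniformly random injective function from Fin n to Fin K (i.e., F is drawn from the uniform probability measure on the finite set of all injections Fin n → Fin K). Let σ_F be the rank permutation of F, i.e., the unique permutation π of Fin n such that the composition F ∘ π⁻¹ is strictly increasing. Then σ_F is uniformly distributed on the symmetric group on Fin n: for every permutation π of Fin n, the probability that σ_F = π equals 1/n!. -/

import Mathlib

/-- Shuffling by sorting via uniformly random (injective) keys produces a uniformly
random permutation: if `F : Fin n ↪ Fin K` is drawn uniformly at random from the
injections (`n ≤ K`), then for every permutation `π` of `Fin n`, the probability that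
the rank permutation of `F` equals `π` — i.e., that `F ∘ π⁻¹` is strictly increasing —
is exactly `1 / n!`. -/
theorem uniform_random_injection_rank_perm_uniform
    (n K : ℕ) (hn : 0 < n) (hK : n ≤ K) (π : Equiv.Perm (Fin n)) :
    (@PMF.uniformOfFintype (Fin n ↪ Fin K) _
        ⟨Fin.castLEEmb hK⟩).toOuterMeasure
      {F : Fin n ↪ Fin K | StrictMono (⇑F ∘ ⇑π⁻¹)}
      = 1 / (Nat.factorial n : ENNReal) := by
  classical
  have : Nonempty (Fin n ↪ Fin K) := ⟨Fin.castLEEmb hK⟩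
  let e : {F : Fin n ↪ Fin K | StrictMono (⇑F ∘ ⇑π⁻¹)} ≃ (Fin n ↪o Fin K) :=
    { toFun := fun F => OrderEmbedding.ofStrictMono (⇑F.1 ∘ ⇑π⁻¹) F.2
      invFun := fun f => ⟨π.toEmbedding.trans f.toEmbedding, by
        intro a b h
        simpa using h⟩
      left_inv := by
        intro F
        apply Subtype.ext
        ext x
        simp
      right_inv := by
        intro f
        ext x
        simp }
  have hc : Nat.card {F : Fin n ↪ Fin K | StrictMono (⇑F ∘ ⇑π⁻¹)} = K.choose n := by
    rw [Nat.card_congr (e.trans Set.powersetCard.ofFinEmbEquiv), Set.powersetCard.card]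
    simp
  have hpos : (K.choose n : ENNReal) ≠ 0 := by
    exact_mod_cast (Nat.choose_pos hK).ne'
  rw [PMF.toOuterMeasure_uniformOfFintype_apply, ← Nat.card_eq_fintype_card, hc,
    Fintype.card_embedding_eq, Fintype.card_fin, Fintype.card_fin,
    Nat.descFactorial_eq_factorial_mul_choose, Nat.cast_mul]
  simpa using ENNReal.mul_div_mul_right 1 (n.factorial : ENNReal) hpos (ENNReal.natCast_ne_top _)
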